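/- Let γ > 0 and let F = (F_x)_{x∈ℝ^d} be a γ-coherent germ: there exist φ ∈ D with ∫φ ≠ 0 and, for each compact K, an exponent α_K ≤ min{0,γ} with |(F_z − F_y)(φ_y^ε)| ≲ ε^{α_K}(|z−y|+ε)^{γ−α_K} uniformly over y,z ∈ K, ε ∈ (0,1]. Then there exists a unique distribution f ∈ D'(ℝ^d) such that for every test function ξ ∈ D, |(f − F_x)(ξ_x^λ)| ≲ λ^γ uniformly for x in compact sets and λ ∈ (0,1]. Moreover the map F ↦ f is linear. -/

import Mathlib

open MeasureTheory Metric Set Filter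

noncomputable section

abbrev Ed (d : ℕ) := EuclideanSpace ℝ (Fin d)

/-- Test functions: smooth compactly supported functions on ℝ^d. -/
def IsTestFunction {d : ℕ} (φ : Ed d → ℝ) : Prop :=
  ContDiff ℝ (⊤ : ℕ∞) φ ∧ HasCompactSupport φ

/-- The scaled test function `φ_x^λ(z) = λ^{-d} φ(λ⁻¹(z - x))`. -/
def scaled {d : ℕ} (φ : Ed d → ℝ) (x : Ed d) (l : ℝ) : Ed d → ℝ :=
  fun z => (l ^ d)⁻¹ * φ (l⁻¹ • (z - x))

/-- The `C^r` norm: sup of the norms of the iterated derivatives of order ≤ r. -/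
def Cnorm {d : ℕ} (r : ℕ) (φ : Ed d → ℝ) : ℝ :=
  ⨆ i : Fin (r + 1), ⨆ x : Ed d, ‖iteratedFDeriv ℝ (i : ℕ) φ x‖

/-- The family `B_r` of test functions supported in `B(0,1)` with `C^r` norm at most 1. -/
def Br {d : ℕ} (r : ℕ) (ψ : Ed d → ℝ) : Prop :=
  IsTestFunction ψ ∧ tsupport ψ ⊆ closedBall (0 : Ed d) 1 ∧ Cnorm r ψ ≤ 1

/-- A linear functional is a distribution if on every compact set it is bounded
by some `C^r` norm. -/
def IsDistribution {d : ℕ} (T : (Ed d → ℝ) →ₗ[ℝ] ℝ) : Prop :=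
  ∀ K : Set (Ed d), IsCompact K → ∃ r : ℕ, ∃ C : ℝ,
    ∀ φ : Ed d → ℝ, IsTestFunction φ → tsupport φ ⊆ K → |T φ| ≤ C * Cnorm r φ

/-- A germ: a measurable family of distributions. -/
def IsGerm {d : ℕ} (F : Ed d → ((Ed d → ℝ) →ₗ[ℝ] ℝ)) : Prop :=
  (∀ x, IsDistribution (F x)) ∧
  ∀ ψ : Ed d → ℝ, IsTestFunction ψ → Measurable fun x => F x ψ

/-- Monomial `y^k` for a multi-index `k`. -/
def mono {d : ℕ} (k : Fin d → ℕ) (y : Ed d) : ℝ := ∏ i, (y i) ^ (k i)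

/-- Convolution of two functions. -/
def conv {d : ℕ} (f g : Ed d → ℝ) : Ed d → ℝ := fun x => ∫ y, f (x - y) * g y

/-- `rIndex α` is the smallest integer `r > -α` (for `α ≤ 0`). -/
def rIndex (α : ℝ) : ℕ := Nat.floor (-α) + 1

/-- Negative Hölder space condition `T ∈ C^α` for `α ≤ 0`. -/
def HolderNeg {d : ℕ} (α : ℝ) (T : (Ed d → ℝ) →ₗ[ℝ] ℝ) : Prop :=
  ∀ K : Set (Ed d), IsCompact K → ∃ C : ℝ, ∀ x ∈ K, ∀ ε ∈ Set.Ioc (0:ℝ) 1,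
    ∀ ψ : Ed d → ℝ, Br (rIndex α) ψ → |T (scaled ψ x ε)| ≤ C * ε ^ α

/-- `(α,γ)`-coherence of a germ with respect to the test function φ. -/
def AlphaGammaCoherent {d : ℕ} (α γ : ℝ) (F : Ed d → ((Ed d → ℝ) →ₗ[ℝ] ℝ))
    (φ : Ed d → ℝ) : Prop :=
  ∀ K : Set (Ed d), IsCompact K → ∃ C : ℝ, ∀ y ∈ K, ∀ z ∈ K, ∀ ε ∈ Set.Ioc (0:ℝ) 1,
    |F z (scaled φ y ε) - F y (scaled φ y ε)| ≤ C * ε ^ α * (‖z - y‖ + ε) ^ (γ - α)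

/-- Global homogeneity bound β for a germ with respect to the test function φ. -/
def HomBound {d : ℕ} (β : ℝ) (F : Ed d → ((Ed d → ℝ) →ₗ[ℝ] ℝ)) (φ : Ed d → ℝ) : Prop :=
  ∀ K : Set (Ed d), IsCompact K → ∃ C : ℝ, ∀ x ∈ K, ∀ ε ∈ Set.Ioc (0:ℝ) 1,
    |F x (scaled φ x ε)| ≤ C * ε ^ β
/-- γ-coherence of a germ with respect to a fixed test function φ (with K-dependent
exponents α_K given existentially). -/
def GammaCoherentWith {d : ℕ} (γ : ℝ) (F : Ed d → ((Ed d → ℝ) →ₗ[ℝ] ℝ))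
    (φ : Ed d → ℝ) : Prop :=
  ∀ K : Set (Ed d), IsCompact K → ∃ α : ℝ, α ≤ min 0 γ ∧ ∃ C : ℝ,
    ∀ y ∈ K, ∀ z ∈ K, ∀ ε ∈ Set.Ioc (0:ℝ) 1,
      |F z (scaled φ y ε) - F y (scaled φ y ε)| ≤ C * ε ^ α * (‖z - y‖ + ε) ^ (γ - α)

/-- `f` reconstructs the germ `F` at rate `λ^γ`, for every test function `ξ`,
uniformly over compact sets. -/
def Reconstructs {d : ℕ} (γ : ℝ) (F : Ed d → ((Ed d → ℝ) →ₗ[ℝ] ℝ))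
    (f : (Ed d → ℝ) →ₗ[ℝ] ℝ) : Prop :=
  ∀ ξ : Ed d → ℝ, IsTestFunction ξ → ∀ K : Set (Ed d), IsCompact K → ∃ C : ℝ,
    ∀ x ∈ K, ∀ l ∈ Set.Ioc (0:ℝ) 1,
      |f (scaled ξ x l) - F x (scaled ξ x l)| ≤ C * l ^ γ

/-
Let `φ^l` be the rescaling of a mollifier `φ` to scale `l`. Splitting off successive scales expands
a test function as `ψ = ∑ₙ φ^{ε2⁻ⁿ} * Rₙψ`, where `Rₙ` is the product of the operators
`1 - φ^{ε2⁻ᵏ} *` over `k < n`. Each factor trades a derivative of `ψ` for a factor `ε2⁻ᵏ`, so `Rₙψ`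
decays faster than any geometric sequence. Hence `T_ε ψ = ∑ₙ ∫ F_w(φ_w^{ε2⁻ⁿ}) Rₙψ(w) dw`
converges whatever the exponent `α` in the coherence bound, and since the same formula gives
back `T` for the constant germ `T`, comparing `F` with `F_x` yields `|(T_ε - F_x)(ξ_x^ε)| ≲ ε^γ`.
Moreover `T_ε ψ - T_{ε/2} ψ = ∫ (F_w - T_{ε/2})(φ_w^ε) ψ(w) dw = O(ε^γ)`, so for `γ > 0` these
functionals converge along `ε = 2⁻ᴺ` to a reconstruction. For uniqueness, the difference `g` of two
reconstructions satisfies `g(φ^l * ψ) = ∫ g(φ_w^l) ψ(w) dw = O(l^γ)`, while the left side tends to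
`g ψ`.
-/

open Function (support)
open scoped ContDiff Convolution BoundedContinuousFunction Pointwise Topology

theorem exists_strongDual_comp_eq_of_norm_le {𝕜 V X : Type*} [RCLike 𝕜] [AddCommGroup V]
    [Module 𝕜 V] [SeminormedAddCommGroup X] [NormedSpace 𝕜 X] (J : V →ₗ[𝕜] X) (T : V →ₗ[𝕜] 𝕜)
    (C : ℝ) (hT : ∀ v, ‖T v‖ ≤ C * ‖J v‖) : ∃ S : StrongDual 𝕜 X, ∀ v, S (J v) = T v := by
  obtain ⟨s, hs⟩ := J.rangeRestrict.exists_rightInverse_of_surjective J.range_rangeRestrict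
  have hJs (p : J.range) : J (s p) = p := congrArg Subtype.val (LinearMap.congr_fun hs p)
  have hker (v : V) (hv : J v = 0) : T v = 0 := by simpa [hv] using hT v
  obtain ⟨S, hS, -⟩ := exists_extension_norm_eq J.range
    ((T ∘ₗ s).mkContinuous C fun p => by simpa [hJs] using hT (s p))
  refine ⟨S, fun v => ?_⟩
  have hv : J (s (J.rangeRestrict v) - v) = 0 := by simp [hJs]
  calc S (J v) = T (s (J.rangeRestrict v)) := hS (J.rangeRestrict v)
    _ = T v := sub_eq_zero.1 (by rw [← map_sub, hker _ hv])

theorem exists_linearMap_forall_tendsto {ι V : Type*} [AddCommGroup V] [Module ℝ V]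
    {l : Filter ι} [l.NeBot] {p : Submodule ℝ V} (T : ι → p →ₗ[ℝ] ℝ)
    (hT : ∀ v, ∃ a, Tendsto (fun i => T i v) l (𝓝 a)) :
    ∃ f : V →ₗ[ℝ] ℝ, ∀ v : p, Tendsto (fun i => T i v) l (𝓝 (f v)) := by
  choose g hg using hT
  obtain ⟨f, hf⟩ := (linearMapOfTendsto g T (tendsto_pi_nhds.2 hg)).exists_extend
  exact ⟨f, fun v => (hg v).trans_eq (congrArg 𝓝 (LinearMap.congr_fun hf v).symm)⟩

theorem map_integral_smul {Ω A B : Type*} [MeasurableSpace Ω] (μ : Measure Ω)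
    [NormedAddCommGroup A] [NormedSpace ℝ A] [NormedAddCommGroup B] [NormedSpace ℝ B]
    (e : A ≃ₗᵢ[ℝ] B) (κ : Ω → ℝ) (f : Ω → A) :
    e (∫ t, κ t • f t ∂μ) = ∫ t, κ t • e (f t) ∂μ := by
  simpa using (e.toContinuousLinearEquiv.integral_comp_comm (μ := μ) fun t => κ t • f t).symm

section Integral

variable {Ω : Type*} {h u : Ω → ℝ} {M : ℝ}

theorem norm_mul_le_of_abs_le_on_support (hM : ∀ t ∈ support u, |h t| ≤ M) (t : Ω) :
    ‖h t * u t‖ ≤ M * |u t| := by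
  by_cases ht : t ∈ support u
  · rw [norm_mul]
    exact mul_le_mul_of_nonneg_right (hM t ht) (abs_nonneg _)
  · simp [Function.notMem_support.1 ht]

variable [MeasurableSpace Ω] {μ : Measure Ω}

theorem abs_integral_mul_le_of_abs_le_on_support (hu : Integrable u μ)
    (hM : ∀ t ∈ support u, |h t| ≤ M) : |∫ t, h t * u t ∂μ| ≤ M * ∫ t, |u t| ∂μ := by
  rw [← integral_const_mul]
  exact norm_integral_le_of_norm_le (hu.abs.const_mul M)
    (ae_of_all _ (norm_mul_le_of_abs_le_on_support hM))

theorem integrable_mul_of_abs_le_on_support (hh : AEStronglyMeasurable h μ) (hu : Integrable u μ)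
    (hM : ∀ t ∈ support u, |h t| ≤ M) : Integrable (fun t => h t * u t) μ :=
  (hu.abs.const_mul M).mono' (hh.mul hu.aestronglyMeasurable)
    (ae_of_all _ (norm_mul_le_of_abs_le_on_support hM))

end Integral

section Convolution

variable {G F : Type*} [NormedAddCommGroup G] [MeasurableSpace G] {μ : Measure G}
  [NormedAddCommGroup F] [NormedSpace ℝ F] {κ : G → ℝ} {g : G → F}

theorem norm_convolution_lsmul_le (hκ : Integrable κ μ) {B : ℝ} (hg : ∀ x, ‖g x‖ ≤ B) (x : G) :
    ‖(κ ⋆[.lsmul ℝ ℝ, μ] g) x‖ ≤ (∫ t, ‖κ t‖ ∂μ) * B := by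
  rw [← integral_mul_const]
  refine norm_integral_le_of_norm_le (hκ.norm.mul_const B) (ae_of_all _ fun t => ?_)
  rw [ContinuousLinearMap.lsmul_apply, norm_smul]
  exact mul_le_mul_of_nonneg_left (hg _) (norm_nonneg _)

variable [NormedSpace ℝ G] [BorelSpace G]

theorem norm_sub_convolution_lsmul_le [SecondCountableTopology G] [CompleteSpace F]
    [SFinite μ] [μ.IsAddLeftInvariant] {ρ B : ℝ}
    (hρ : 0 ≤ ρ) (hκ : Integrable κ μ) (hκ_one : ∫ t, κ t ∂μ = 1)
    (hκ_supp : support κ ⊆ ball 0 ρ) (hg : Differentiable ℝ g)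
    (hB : ∀ x, ‖fderiv ℝ g x‖ ≤ B) (x : G) :
    ‖g x - (κ ⋆[.lsmul ℝ ℝ, μ] g) x‖ ≤ (∫ t, ‖κ t‖ ∂μ) * (ρ * B) := by
  have hB₀ : 0 ≤ B := (norm_nonneg _).trans (hB 0)
  have hdist (y : G) (hy : y ∈ ball x ρ) : dist (g y) (g x) ≤ ρ * B := by
    rw [dist_eq_norm, mul_comm]
    exact (convex_univ.norm_image_sub_le_of_norm_fderiv_le (𝕜 := ℝ) (fun z _ => hg z)
      (fun z _ => hB z) (mem_univ x) (mem_univ y)).trans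
      (mul_le_mul_of_nonneg_left (mem_ball_iff_norm.1 hy).le hB₀)
  have h := dist_convolution_le' (μ := μ) (.lsmul ℝ ℝ) (mul_nonneg hρ hB₀) hκ hκ_supp
    hg.continuous.aestronglyMeasurable hdist
  simp only [ContinuousLinearMap.lsmul_apply, integral_smul_const, hκ_one, one_smul] at h
  rw [← dist_eq_norm, dist_comm]
  refine h.trans (mul_le_mul_of_nonneg_right ?_ (mul_nonneg hρ hB₀))
  exact mul_le_of_le_one_left (integral_nonneg fun _ => norm_nonneg _)
    ContinuousLinearMap.opNorm_lsmul_le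

variable [SFinite μ] [μ.IsAddLeftInvariant]

theorem fderiv_convolution_lsmul (hκ : LocallyIntegrable κ μ) (hg : ContDiff ℝ 1 g)
    (hgc : HasCompactSupport g) :
    fderiv ℝ (κ ⋆[.lsmul ℝ ℝ, μ] g) = κ ⋆[.lsmul ℝ ℝ, μ] fderiv ℝ g :=
  funext fun x => (hgc.hasFDerivAt_convolution_right (.lsmul ℝ ℝ) hκ hg x).fderiv

theorem iteratedFDeriv_convolution_lsmul (hκ : LocallyIntegrable κ μ) (hg : ContDiff ℝ ∞ g)
    (hgc : HasCompactSupport g) (i : ℕ) :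
    iteratedFDeriv ℝ i (κ ⋆[.lsmul ℝ ℝ, μ] g) = κ ⋆[.lsmul ℝ ℝ, μ] iteratedFDeriv ℝ i g := by
  induction i with
  | zero =>
    funext x
    exact map_integral_smul μ (B := G [×0]→L[ℝ] F) (continuousMultilinearCurryFin0 ℝ G F).symm κ
      fun t => g (x - t)
  | succ i ih =>
    have hi : ContDiff ℝ 1 (iteratedFDeriv ℝ i g) :=
      hg.iteratedFDeriv_right (by exact_mod_cast le_top)
    funext x
    rw [iteratedFDeriv_succ_eq_comp_left, iteratedFDeriv_succ_eq_comp_left, ih,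
      fderiv_convolution_lsmul hκ hi (hgc.iteratedFDeriv i)]
    exact map_integral_smul μ (B := G [×(i + 1)]→L[ℝ] F)
      (continuousMultilinearCurryLeftEquiv ℝ (fun _ : Fin (i + 1) => G) F).symm κ
      fun t => fderiv ℝ (iteratedFDeriv ℝ i g) (x - t)

end Convolution

/-! ### Test functions -/

namespace IsTestFunction

variable {d : ℕ} {φ ψ : Ed d → ℝ}

protected theorem continuous (hφ : IsTestFunction φ) : Continuous φ := hφ.1.continuous

theorem contDiff_nat (hφ : IsTestFunction φ) (n : ℕ) : ContDiff ℝ n φ :=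
  hφ.1.of_le (by exact_mod_cast le_top)

protected theorem integrable (hφ : IsTestFunction φ) : Integrable φ :=
  hφ.continuous.integrable_of_hasCompactSupport hφ.2

protected theorem add (hφ : IsTestFunction φ) (hψ : IsTestFunction ψ) : IsTestFunction (φ + ψ) :=
  ⟨hφ.1.add hψ.1, hφ.2.add hψ.2⟩

protected theorem sub (hφ : IsTestFunction φ) (hψ : IsTestFunction ψ) : IsTestFunction (φ - ψ) :=
  ⟨hφ.1.sub hψ.1, hφ.2.sub hψ.2⟩

protected theorem const_smul (c : ℝ) (hφ : IsTestFunction φ) : IsTestFunction (c • φ) :=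
  ⟨hφ.1.const_smul c, hφ.2.smul_left (f := fun _ => c)⟩

theorem comp_sub (hφ : IsTestFunction φ) (w : Ed d) : IsTestFunction fun x => φ (x - w) :=
  ⟨hφ.1.comp (contDiff_id.sub contDiff_const), hφ.2.comp_homeomorph (Homeomorph.subRight w)⟩

protected theorem scaled (hφ : IsTestFunction φ) (x : Ed d) {l : ℝ} (hl : 0 < l) :
    IsTestFunction (scaled φ x l) := by
  have h := hφ.2.comp_homeomorph
    ((Homeomorph.subRight x).trans (Homeomorph.smulOfNeZero l⁻¹ (inv_ne_zero hl.ne')))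
  exact ⟨contDiff_const.mul (hφ.1.comp ((contDiff_id.sub contDiff_const).const_smul l⁻¹)),
    h.mul_left⟩

theorem continuous_iteratedFDeriv (hφ : IsTestFunction φ) (i : ℕ) :
    Continuous (iteratedFDeriv ℝ i φ) :=
  (hφ.contDiff_nat i).continuous_iteratedFDeriv le_rfl

theorem exists_norm_iteratedFDeriv_le (hφ : IsTestFunction φ) (i : ℕ) :
    ∃ B, ∀ x, ‖iteratedFDeriv ℝ i φ x‖ ≤ B :=
  (hφ.2.iteratedFDeriv i).exists_bound_of_continuous (hφ.continuous_iteratedFDeriv i)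

theorem exists_support_subset_ball (hφ : IsTestFunction φ) :
    ∃ R > 0, support φ ⊆ ball 0 R := by
  obtain ⟨R, hR, hs⟩ := hφ.2.isCompact.isBounded.subset_ball_lt 0 0
  exact ⟨R, hR, (subset_tsupport φ).trans hs⟩

end IsTestFunction

/-- The space `𝓓(ℝ^d)` of test functions, as a subspace of all functions, on which linear
functionals can be restricted and extended. -/
def testFunctions (d : ℕ) : Submodule ℝ (Ed d → ℝ) where
  carrier := {φ | IsTestFunction φ}
  add_mem' := .add
  zero_mem' := ⟨contDiff_const, .zero⟩
  smul_mem' c _ := .const_smul c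

section Scaled

variable {d : ℕ} (φ ψ : Ed d → ℝ) (x : Ed d)

theorem scaled_eq_comp_sub (l : ℝ) : scaled φ x l = fun z => scaled φ 0 l (z - x) := by
  ext; simp [scaled]

theorem scaled_zero_one : scaled φ 0 1 = φ := by
  ext; simp [scaled]

theorem scaled_scaled (a b : ℝ) : scaled (scaled φ 0 a) x b = scaled φ x (a * b) := by
  ext
  simp only [scaled, sub_zero, mul_pow, mul_inv, smul_smul]
  ring

theorem scaled_sub (l : ℝ) : scaled (φ - ψ) x l = scaled φ x l - scaled ψ x l := by
  ext; simp [scaled, mul_sub]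

theorem scaled_const_smul (c l : ℝ) : scaled (c • φ) x l = c • scaled φ x l := by
  ext
  simp only [scaled, Pi.smul_apply, smul_eq_mul, mul_left_comm]

variable {l : ℝ}

theorem integral_scaled (hl : 0 < l) : ∫ t, scaled φ x l t = ∫ t, φ t := by
  have hld : 0 < l ^ d := pow_pos hl d
  rw [scaled_eq_comp_sub, integral_sub_right_eq_self (scaled φ 0 l) x]
  simp only [scaled, sub_zero, integral_const_mul, Measure.integral_comp_smul,
    finrank_euclideanSpace_fin, inv_pow, inv_inv, abs_of_pos hld, smul_eq_mul,
    inv_mul_cancel_left₀ hld.ne']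

theorem integral_abs_scaled (hl : 0 < l) : ∫ t, |scaled φ x l t| = ∫ t, |φ t| := by
  rw [← integral_scaled (fun t => |φ t|) x hl]
  simp only [scaled, abs_mul, abs_of_pos (inv_pos.2 (pow_pos hl d))]

variable {φ} {ρ : ℝ}

theorem support_scaled_subset_ball (hφ : support φ ⊆ ball 0 ρ) (hl : 0 < l) :
    support (scaled φ x l) ⊆ ball x (ρ * l) := fun t ht => by
  have h := hφ (Function.mem_support.2 (right_ne_zero_of_mul (Function.mem_support.1 ht)))
  rwa [mem_ball_zero_iff, norm_smul, norm_inv, Real.norm_of_nonneg hl.le, inv_mul_eq_div,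
    div_lt_iff₀ hl, ← mem_ball_iff_norm] at h

theorem norm_iteratedFDeriv_scaled (hφ : IsTestFunction φ) (hl : 0 < l) (i : ℕ) (y : Ed d) :
    ‖iteratedFDeriv ℝ i (scaled φ x l) y‖
      = (l ^ d)⁻¹ * ((l ^ i)⁻¹ * ‖iteratedFDeriv ℝ i φ (l⁻¹ • (y - x))‖) := by
  have hdil : ContDiff ℝ i fun v => φ (l⁻¹ • v) :=
    (hφ.contDiff_nat i).comp (contDiff_id.const_smul l⁻¹)
  have htrans : ContDiff ℝ i fun z => (fun v => φ (l⁻¹ • v)) (z - x) :=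
    hdil.comp (contDiff_id.sub contDiff_const)
  change ‖iteratedFDeriv ℝ i (fun z => (l ^ d)⁻¹ • (fun v => φ (l⁻¹ • v)) (z - x)) y‖ = _
  rw [iteratedFDeriv_const_smul_apply' htrans.contDiffAt,
    iteratedFDeriv_comp_sub (f := fun v => φ (l⁻¹ • v)),
    iteratedFDeriv_comp_const_smul _ (hφ.contDiff_nat i), norm_smul, norm_smul]
  simp only [inv_pow, norm_inv, norm_pow, Real.norm_of_nonneg hl.le]

end Scaled

section Conv

variable {d : ℕ} {κ g h : Ed d → ℝ}

theorem conv_eq_convolution (κ g : Ed d → ℝ) :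
    conv κ g = κ ⋆[.lsmul ℝ ℝ, (volume : Measure (Ed d))] g :=
  funext fun _ => (convolution_lsmul_swap (𝕜 := ℝ) (f := κ) (g := g)).symm

theorem conv_comm (κ g : Ed d → ℝ) : conv κ g = conv g κ := by
  simp only [conv_eq_convolution κ g]
  ext x
  simp only [convolution_def, ContinuousLinearMap.lsmul_apply, smul_eq_mul, conv, mul_comm]

theorem conv_const_smul (c : ℝ) : conv κ (c • g) = c • conv κ g := by
  simp only [conv_eq_convolution, convolution_smul]

theorem support_conv_subset_ball {x : Ed d} {ρ r : ℝ} (hρ : 0 < ρ) (hr : 0 < r)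
    (hκ : support κ ⊆ ball 0 ρ) (hg : support g ⊆ ball x r) :
    support (conv κ g) ⊆ ball x (r + ρ) := by
  rw [conv_eq_convolution, add_comm r ρ]
  simpa only [ball_add_ball hρ hr, zero_add] using
    (support_convolution_subset (μ := volume) (.lsmul ℝ ℝ)).trans (Set.add_subset_add hκ hg)

theorem scaled_conv (η ξ : Ed d → ℝ) (x : Ed d) {l : ℝ} (hl : 0 < l) :
    scaled (conv η ξ) x l = conv (scaled η 0 l) (scaled ξ x l) := by
  ext z
  simp only [scaled, conv]
  rw [← integral_scaled _ x hl, ← integral_const_mul]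
  refine integral_congr_ae (ae_of_all _ fun y => ?_)
  simp only [scaled, sub_zero, ← smul_sub, sub_sub_sub_cancel_right]
  ring

namespace IsTestFunction

protected theorem conv (hκ : IsTestFunction κ) (hg : IsTestFunction g) :
    IsTestFunction (conv κ g) := by
  rw [conv_eq_convolution]
  exact ⟨hg.2.contDiff_convolution_right _ hκ.continuous.locallyIntegrable hg.1,
    hκ.2.convolution _ hg.2⟩

theorem conv_add (hκ : IsTestFunction κ) (hg : IsTestFunction g) (hh : IsTestFunction h) :
    conv κ (g + h) = conv κ g + conv κ h := by
  have hexists {u : Ed d → ℝ} (hu : IsTestFunction u) :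
      ConvolutionExists κ u (.lsmul ℝ ℝ) (volume : Measure (Ed d)) :=
    hu.2.convolutionExists_right _ hκ.continuous.locallyIntegrable hu.continuous
  simp only [conv_eq_convolution, (hexists hg).distrib_add (hexists hh)]

theorem iteratedFDeriv_conv (hκ : IsTestFunction κ) (hg : IsTestFunction g) (i : ℕ) :
    iteratedFDeriv ℝ i (conv κ g) = κ ⋆[.lsmul ℝ ℝ, volume] iteratedFDeriv ℝ i g := by
  rw [conv_eq_convolution,
    iteratedFDeriv_convolution_lsmul hκ.continuous.locallyIntegrable hg.1 hg.2]

end IsTestFunction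

end Conv

section Cnorm

variable {d : ℕ} {u v κ : Ed d → ℝ} {r : ℕ}

theorem Cnorm_nonneg (r : ℕ) (u : Ed d → ℝ) : 0 ≤ Cnorm r u :=
  Real.iSup_nonneg fun _ => Real.iSup_nonneg fun _ => norm_nonneg _

theorem Cnorm_le {D : ℝ} (h : ∀ i ≤ r, ∀ x, ‖iteratedFDeriv ℝ i u x‖ ≤ D) : Cnorm r u ≤ D :=
  ciSup_le fun i => ciSup_le (h i (Nat.lt_succ_iff.1 i.2))

theorem norm_iteratedFDeriv_le_Cnorm (hu : IsTestFunction u) {i : ℕ} (hi : i ≤ r) (x : Ed d) :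
    ‖iteratedFDeriv ℝ i u x‖ ≤ Cnorm r u := by
  obtain ⟨B, hB⟩ := hu.exists_norm_iteratedFDeriv_le i
  exact (le_ciSup ⟨B, forall_mem_range.2 hB⟩ x).trans
    (le_ciSup (f := fun i : Fin (r + 1) => ⨆ x, ‖iteratedFDeriv ℝ (i : ℕ) u x‖)
      (finite_range _).bddAbove ⟨i, Nat.lt_succ_iff.2 hi⟩)

theorem abs_le_Cnorm (hu : IsTestFunction u) (r : ℕ) (x : Ed d) : |u x| ≤ Cnorm r u := by
  simpa using norm_iteratedFDeriv_le_Cnorm hu (Nat.zero_le r) x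

theorem Cnorm_mono (hu : IsTestFunction u) {s : ℕ} (hrs : r ≤ s) : Cnorm r u ≤ Cnorm s u :=
  Cnorm_le fun _ hi x => norm_iteratedFDeriv_le_Cnorm hu (hi.trans hrs) x

theorem Cnorm_sub_le (hu : IsTestFunction u) (hv : IsTestFunction v) (r : ℕ) :
    Cnorm r (u - v) ≤ Cnorm r u + Cnorm r v := by
  refine Cnorm_le fun i hi x => ?_
  rw [iteratedFDeriv_sub_apply (hu.contDiff_nat i).contDiffAt (hv.contDiff_nat i).contDiffAt]
  exact (norm_sub_le _ _).trans (add_le_add (norm_iteratedFDeriv_le_Cnorm hu hi x)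
    (norm_iteratedFDeriv_le_Cnorm hv hi x))

theorem Cnorm_scaled_le (hu : IsTestFunction u) (x : Ed d) {l : ℝ} (hl : 1 ≤ l) (r : ℕ) :
    Cnorm r (scaled u x l) ≤ Cnorm r u := by
  have hl₀ : 0 < l := one_pos.trans_le hl
  have hinv (n : ℕ) : (l ^ n)⁻¹ ≤ 1 := inv_le_one_of_one_le₀ (one_le_pow₀ hl)
  refine Cnorm_le fun i hi y => ?_
  rw [norm_iteratedFDeriv_scaled x hu hl₀]
  calc (l ^ d)⁻¹ * ((l ^ i)⁻¹ * ‖iteratedFDeriv ℝ i u (l⁻¹ • (y - x))‖)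
      ≤ ‖iteratedFDeriv ℝ i u (l⁻¹ • (y - x))‖ :=
        (mul_le_of_le_one_left (by positivity) (hinv d)).trans
          (mul_le_of_le_one_left (norm_nonneg _) (hinv i))
    _ ≤ Cnorm r u := norm_iteratedFDeriv_le_Cnorm hu hi _

theorem Cnorm_conv_le (hκ : IsTestFunction κ) (hu : IsTestFunction u) (r : ℕ) :
    Cnorm r (conv κ u) ≤ (∫ t, |κ t|) * Cnorm r u := by
  refine Cnorm_le fun i hi x => ?_
  rw [hκ.iteratedFDeriv_conv hu]
  exact norm_convolution_lsmul_le hκ.integrable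
    (fun y => norm_iteratedFDeriv_le_Cnorm hu hi y) x

theorem integral_abs_le_Cnorm {s : Set (Ed d)} (hs : volume s ≠ ⊤) (hu : IsTestFunction u)
    (hus : support u ⊆ s) : ∫ t, |u t| ≤ volume.real s * Cnorm 0 u := by
  rw [← setIntegral_eq_integral_of_forall_compl_eq_zero (s := s) fun t ht => by
    rw [Function.notMem_support.1 fun h => ht (hus h), abs_zero]]
  refine (le_abs_self _).trans ?_
  rw [mul_comm]
  exact norm_setIntegral_le_of_norm_le_const (f := fun t => |u t|) hs.lt_top fun t _ => by
    simpa using abs_le_Cnorm hu 0 t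

end Cnorm

/-! ### Distributions -/

section Jets

variable {d : ℕ}

/-- Jets of order `r`: bounded continuous candidates for the derivatives of order at most `r` of a
function. The map `jet r` embeds test functions isometrically for `Cnorm r`, so that Hahn–Banach
represents a distribution on a compact set by a continuous functional on this Banach space. -/
def JetSpace (d r : ℕ) : Type :=
  (i : Fin (r + 1)) → (Ed d →ᵇ Ed d [×(i : ℕ)]→L[ℝ] ℝ)

instance (d r : ℕ) : NormedAddCommGroup (JetSpace d r) :=
  inferInstanceAs (NormedAddCommGroup ((i : Fin (r + 1)) → (Ed d →ᵇ Ed d [×(i : ℕ)]→L[ℝ] ℝ)))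

instance (d r : ℕ) : NormedSpace ℝ (JetSpace d r) :=
  inferInstanceAs (NormedSpace ℝ ((i : Fin (r + 1)) → (Ed d →ᵇ Ed d [×(i : ℕ)]→L[ℝ] ℝ)))

instance (d r : ℕ) : CompleteSpace (JetSpace d r) :=
  inferInstanceAs (CompleteSpace ((i : Fin (r + 1)) → (Ed d →ᵇ Ed d [×(i : ℕ)]→L[ℝ] ℝ)))

/-- The derivatives of order at most `r` of a test function. -/
def jet (r : ℕ) : testFunctions d →ₗ[ℝ] JetSpace d r where
  toFun u i := .ofNormedAddCommGroup (iteratedFDeriv ℝ i (u : Ed d → ℝ))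
    (IsTestFunction.continuous_iteratedFDeriv u.2 i) _
    (IsTestFunction.exists_norm_iteratedFDeriv_le u.2 i).choose_spec
  map_add' u v := funext fun i => BoundedContinuousFunction.ext fun _ =>
    iteratedFDeriv_add_apply (IsTestFunction.contDiff_nat u.2 i).contDiffAt
      (IsTestFunction.contDiff_nat v.2 i).contDiffAt
  map_smul' _ u := funext fun i => BoundedContinuousFunction.ext fun _ =>
    iteratedFDeriv_const_smul_apply (IsTestFunction.contDiff_nat u.2 i).contDiffAt

/-- The value at `x` of the component of order `i` of a jet. -/
def jetEval {r : ℕ} (i : Fin (r + 1)) (x : Ed d) : JetSpace d r →L[ℝ] (Ed d [×(i : ℕ)]→L[ℝ] ℝ) :=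
  (BoundedContinuousFunction.evalCLM ℝ x).comp (ContinuousLinearMap.proj (R := ℝ)
    (φ := fun i : Fin (r + 1) => Ed d →ᵇ Ed d [×(i : ℕ)]→L[ℝ] ℝ) i)

theorem jetEval_jet (r : ℕ) (u : testFunctions d) (i : Fin (r + 1)) (x : Ed d) :
    jetEval i x (jet r u) = iteratedFDeriv ℝ i (u : Ed d → ℝ) x :=
  rfl

theorem Cnorm_le_norm_jet (r : ℕ) (u : testFunctions d) : Cnorm r (u : Ed d → ℝ) ≤ ‖jet r u‖ :=
  ciSup_le fun i => ciSup_le fun x =>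
    ((jet r u i).norm_coe_le_norm x).trans (norm_le_pi_norm
      (G := fun i : Fin (r + 1) => Ed d →ᵇ Ed d [×(i : ℕ)]→L[ℝ] ℝ) (jet r u) i)

theorem continuous_jet_comp_sub (r : ℕ) {η : Ed d → ℝ} (hη : IsTestFunction η) :
    Continuous fun w => jet r ⟨fun x => η (x - w), hη.comp_sub w⟩ := by
  refine continuous_pi (A := fun i : Fin (r + 1) => Ed d →ᵇ Ed d [×(i : ℕ)]→L[ℝ] ℝ)
    fun i => Metric.continuous_iff.2 fun w e he => ?_
  have huc : UniformContinuous (iteratedFDeriv ℝ (i : ℕ) η) :=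
    (hη.2.iteratedFDeriv i).uniformContinuous_of_continuous (hη.continuous_iteratedFDeriv i)
  obtain ⟨δ, hδ, hηδ⟩ := Metric.uniformContinuous_iff.1 huc (e / 2) (half_pos he)
  refine ⟨δ, hδ, fun v hv => lt_of_le_of_lt ?_ (half_lt_self he)⟩
  refine (BoundedContinuousFunction.dist_le (half_pos he).le).2 fun x => ?_
  change dist (iteratedFDeriv ℝ i (fun x => η (x - v)) x)
    (iteratedFDeriv ℝ i (fun x => η (x - w)) x) ≤ _
  rw [iteratedFDeriv_comp_sub, iteratedFDeriv_comp_sub]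
  exact (hηδ (by rwa [dist_sub_left])).le

theorem integral_smul_jet_comp_sub (r : ℕ) {η ψ : Ed d → ℝ} (hη : IsTestFunction η)
    (hψ : IsTestFunction ψ) :
    ∫ w, ψ w • jet r ⟨fun x => η (x - w), hη.comp_sub w⟩ = jet r ⟨conv ψ η, hψ.conv hη⟩ := by
  have hint : Integrable fun w => ψ w • jet r ⟨fun x => η (x - w), hη.comp_sub w⟩ :=
    (hψ.continuous.smul (continuous_jet_comp_sub r hη)).integrable_of_hasCompactSupport
      hψ.2.smul_right
  refine funext fun i => BoundedContinuousFunction.ext fun x => ?_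
  calc jetEval i x (∫ w, ψ w • jet r ⟨fun x => η (x - w), hη.comp_sub w⟩)
      = ∫ w, ψ w • iteratedFDeriv ℝ i η (x - w) := by
        rw [← (jetEval i x).integral_comp_comm hint]
        simp only [map_smul, jetEval_jet, iteratedFDeriv_comp_sub]
    _ = iteratedFDeriv ℝ i (conv ψ η) x := by rw [hψ.iteratedFDeriv_conv hη]; rfl

end Jets

namespace IsDistribution

variable {d : ℕ} {T S : (Ed d → ℝ) →ₗ[ℝ] ℝ}

theorem exists_nonneg (hT : IsDistribution T) {K : Set (Ed d)} (hK : IsCompact K) :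
    ∃ r : ℕ, ∃ C ≥ 0, ∀ u, IsTestFunction u → support u ⊆ K → |T u| ≤ C * Cnorm r u := by
  obtain ⟨r, C, hC⟩ := hT K hK
  refine ⟨r, |C|, abs_nonneg C, fun u hu huK => ?_⟩
  exact (hC u hu (closure_minimal huK hK.isClosed)).trans
    (mul_le_mul_of_nonneg_right (le_abs_self C) (Cnorm_nonneg r u))

theorem sub (hT : IsDistribution T) (hS : IsDistribution S) : IsDistribution (T - S) := by
  intro K hK
  obtain ⟨r, C, hC₀, hC⟩ := hT.exists_nonneg hK
  obtain ⟨s, D, hD₀, hD⟩ := hS.exists_nonneg hK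
  refine ⟨max r s, C + D, fun u hu huK => ?_⟩
  have hu' : support u ⊆ K := (subset_tsupport u).trans huK
  calc |(T - S) u| ≤ |T u| + |S u| := abs_sub _ _
    _ ≤ C * Cnorm (max r s) u + D * Cnorm (max r s) u := add_le_add
        ((hC u hu hu').trans (mul_le_mul_of_nonneg_left (Cnorm_mono hu (le_max_left r s)) hC₀))
        ((hD u hu hu').trans (mul_le_mul_of_nonneg_left (Cnorm_mono hu (le_max_right r s)) hD₀))
    _ = (C + D) * Cnorm (max r s) u := (add_mul _ _ _).symm

theorem of_abs_sub_le (hT : IsDistribution T)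
    (h : ∀ K, IsCompact K → ∃ r C, ∀ u, IsTestFunction u → support u ⊆ K →
      |T u - S u| ≤ C * Cnorm r u) : IsDistribution S := by
  rw [← sub_sub_cancel T S]
  refine hT.sub fun K hK => ?_
  obtain ⟨r, C, hC⟩ := h K hK
  exact ⟨r, C, fun u hu huK => hC u hu ((subset_tsupport u).trans huK)⟩

theorem exists_strongDual_jetSpace (hT : IsDistribution T) {K : Set (Ed d)} (hK : IsCompact K) :
    ∃ r, ∃ L : StrongDual ℝ (JetSpace d r), ∀ u (hu : IsTestFunction u), support u ⊆ K →
      L (jet r ⟨u, hu⟩) = T u := by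
  obtain ⟨r, C, hC₀, hC⟩ := hT.exists_nonneg hK
  let V : Submodule ℝ (testFunctions d) :=
    (Submodule.pi Kᶜ fun _ => ⊥).comap (testFunctions d).subtype
  have hV (u : testFunctions d) : u ∈ V ↔ support (u : Ed d → ℝ) ⊆ K := by
    simp [V, Submodule.mem_pi, Function.support_subset_iff, not_imp_comm]
  have hbound (u : V) : ‖T (u : Ed d → ℝ)‖ ≤ C * ‖jet r u.1‖ :=
    (hC u u.1.2 ((hV u.1).1 u.2)).trans
      (mul_le_mul_of_nonneg_left (Cnorm_le_norm_jet r u.1) hC₀)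
  obtain ⟨L, hL⟩ := exists_strongDual_comp_eq_of_norm_le (𝕜 := ℝ) (V := V) (X := JetSpace d r)
    ((jet r).domRestrict V) ((T.domRestrict (testFunctions d)).domRestrict V) C hbound
  exact ⟨r, L, fun u hu huK => hL ⟨⟨u, hu⟩, (hV _).2 huK⟩⟩

theorem apply_conv (hT : IsDistribution T) {η ψ : Ed d → ℝ} (hη : IsTestFunction η)
    (hψ : IsTestFunction ψ) : T (conv η ψ) = ∫ w, T (fun x => η (x - w)) * ψ w := by
  obtain ⟨r, L, hL⟩ := hT.exists_strongDual_jetSpace (hη.2.isCompact.add hψ.2.isCompact)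
  have hint : Integrable fun w => ψ w • jet r ⟨fun x => η (x - w), hη.comp_sub w⟩ :=
    (hψ.continuous.smul (continuous_jet_comp_sub r hη)).integrable_of_hasCompactSupport
      hψ.2.smul_right
  have hsupp : support (conv η ψ) ⊆ tsupport η + tsupport ψ := by
    rw [conv_eq_convolution]
    exact (support_convolution_subset _).trans
      (Set.add_subset_add (subset_tsupport η) (subset_tsupport ψ))
  rw [conv_comm] at hsupp ⊢
  rw [← hL _ (hψ.conv hη) hsupp, ← integral_smul_jet_comp_sub r hη hψ,
    ← L.integral_comp_comm hint]
  refine integral_congr_ae (ae_of_all _ fun w => ?_)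
  by_cases hw : ψ w = 0
  · simp [hw]
  · dsimp only
    rw [map_smul, smul_eq_mul, mul_comm, hL]
    exact fun x hx => ⟨x - w, subset_tsupport η hx, w, subset_tsupport ψ hw, sub_add_cancel x w⟩

theorem continuous_apply_comp_sub (hT : IsDistribution T) {η : Ed d → ℝ}
    (hη : IsTestFunction η) : Continuous fun w => T fun x => η (x - w) := by
  refine continuous_iff_continuousAt.2 fun w₀ => ?_
  obtain ⟨r, L, hL⟩ := hT.exists_strongDual_jetSpace
    (hη.2.isCompact.add (isCompact_closedBall w₀ 1))
  refine (L.continuous.comp (continuous_jet_comp_sub r hη)).continuousAt.congr ?_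
  filter_upwards [closedBall_mem_nhds w₀ one_pos] with w hw
  exact hL _ _ fun x hx => ⟨x - w, subset_tsupport η hx, w, hw, sub_add_cancel x w⟩

variable {φ : Ed d → ℝ} {l : ℝ}

theorem apply_conv_scaled (hT : IsDistribution T) (hφ : IsTestFunction φ) (hl : 0 < l)
    {ψ : Ed d → ℝ} (hψ : IsTestFunction ψ) :
    T (conv (scaled φ 0 l) ψ) = ∫ w, T (scaled φ w l) * ψ w := by
  simp only [hT.apply_conv (hφ.scaled 0 hl) hψ, ← scaled_eq_comp_sub]

theorem continuous_apply_scaled (hT : IsDistribution T) (hφ : IsTestFunction φ) (hl : 0 < l) :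
    Continuous fun w => T (scaled φ w l) := by
  simpa only [← scaled_eq_comp_sub] using hT.continuous_apply_comp_sub (hφ.scaled 0 hl)

theorem integrable_apply_scaled_mul (hT : IsDistribution T) (hφ : IsTestFunction φ) (hl : 0 < l)
    {ψ : Ed d → ℝ} (hψ : IsTestFunction ψ) : Integrable fun w => T (scaled φ w l) * ψ w :=
  ((hT.continuous_apply_scaled hφ hl).mul hψ.continuous).integrable_of_hasCompactSupport
    hψ.2.mul_left

theorem integral_sub_apply_scaled_mul (hT : IsDistribution T) (hφ : IsTestFunction φ) (hl : 0 < l)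
    {ψ : Ed d → ℝ} (hψ : IsTestFunction ψ) {F : Ed d → ((Ed d → ℝ) →ₗ[ℝ] ℝ)}
    (hF : Integrable fun w => F w (scaled φ w l) * ψ w) :
    ∫ w, (F w - T) (scaled φ w l) * ψ w
      = (∫ w, F w (scaled φ w l) * ψ w) - ∫ w, T (scaled φ w l) * ψ w := by
  simp only [LinearMap.sub_apply, sub_mul]
  exact integral_sub hF (hT.integrable_apply_scaled_mul hφ hl hψ)

theorem exists_abs_sub_le_of_le_geometric {T : ℕ → (Ed d → ℝ) →ₗ[ℝ] ℝ} {q : ℝ}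
    (hq : q < 1) (hT : IsDistribution (T 0))
    (h : ∀ K, IsCompact K → ∃ C, ∀ N ψ, IsTestFunction ψ → support ψ ⊆ K →
      |T N ψ - T (N + 1) ψ| ≤ C * q ^ N * ∫ w, |ψ w|) :
    ∃ f, IsDistribution f ∧ ∀ K, IsCompact K → ∃ C, ∀ N ψ, IsTestFunction ψ → support ψ ⊆ K →
      |T N ψ - f ψ| ≤ C * q ^ N * ∫ w, |ψ w| := by
  have hdist {K} (hK : IsCompact K) : ∃ C, ∀ ψ, IsTestFunction ψ → support ψ ⊆ K →
      ∀ N, dist (T N ψ) (T (N + 1) ψ) ≤ (C * ∫ w, |ψ w|) * q ^ N := by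
    obtain ⟨C, hC⟩ := h K hK
    exact ⟨C, fun ψ hψ hψK N => (hC N ψ hψ hψK).trans_eq (mul_right_comm _ _ _)⟩
  obtain ⟨f, hf⟩ := exists_linearMap_forall_tendsto (l := atTop)
    (fun N => (T N).domRestrict (testFunctions d)) fun ψ => by
      obtain ⟨C, hC⟩ := hdist ψ.2.2.isCompact
      exact cauchySeq_tendsto_of_complete
        (cauchySeq_of_le_geometric q _ hq (hC ψ ψ.2 (subset_tsupport _)))
  have hlim {K} (hK : IsCompact K) : ∃ C, ∀ N ψ, IsTestFunction ψ → support ψ ⊆ K →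
      |T N ψ - f ψ| ≤ C * q ^ N * ∫ w, |ψ w| := by
    obtain ⟨C, hC⟩ := hdist hK
    refine ⟨C / (1 - q), fun N ψ hψ hψK => ?_⟩
    exact (dist_le_of_le_geometric_of_tendsto q _ hq (hC ψ hψ hψK) (hf ⟨ψ, hψ⟩) N).trans_eq
      (by ring)
  refine ⟨f, hT.of_abs_sub_le fun K hK => ?_, fun K => hlim⟩
  obtain ⟨C, hC⟩ := hlim hK
  refine ⟨0, |C| * volume.real K, fun u hu huK => ?_⟩
  calc |T 0 u - f u| ≤ C * ∫ w, |u w| := by simpa using hC 0 u hu huK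
    _ ≤ |C| * ∫ w, |u w| :=
      mul_le_mul_of_nonneg_right (le_abs_self C) (integral_nonneg fun _ => abs_nonneg _)
    _ ≤ |C| * (volume.real K * Cnorm 0 u) :=
      mul_le_mul_of_nonneg_left (integral_abs_le_Cnorm hK.measure_ne_top hu huK) (abs_nonneg C)
    _ = |C| * volume.real K * Cnorm 0 u := (mul_assoc _ _ _).symm

end IsDistribution

/-! ### Mollifiers and uniqueness -/

/-- A mollifier of radius `ρ`: a test function of integral one supported in the open ball of
radius `ρ`. It need not be nonnegative, hence the factors `∫ |φ|` in the estimates. -/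
structure IsMollifier {d : ℕ} (φ : Ed d → ℝ) (ρ : ℝ) : Prop where
  isTestFunction : IsTestFunction φ
  integral_eq_one : ∫ x, φ x = 1
  support_subset : support φ ⊆ ball 0 ρ

theorem exists_isMollifier (d : ℕ) : ∃ (φ : Ed d → ℝ) (ρ : ℝ), IsMollifier φ ρ := by
  let b : ContDiffBump (0 : Ed d) := default
  exact ⟨b.normed volume, b.rOut, ⟨b.contDiff_normed, b.hasCompactSupport_normed⟩,
    b.integral_normed, b.support_normed_eq.subset⟩

theorem IsTestFunction.exists_isMollifier {d : ℕ} {φ : Ed d → ℝ} (hφ : IsTestFunction φ)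
    (hφ₀ : ∫ x, φ x ≠ 0) : ∃ ρ, IsMollifier ((∫ x, φ x)⁻¹ • φ) ρ := by
  have hψ := hφ.const_smul (∫ x, φ x)⁻¹
  obtain ⟨ρ, -, hρ⟩ := hψ.exists_support_subset_ball
  refine ⟨ρ, hψ, ?_, hρ⟩
  simp only [Pi.smul_apply, smul_eq_mul, integral_const_mul, inv_mul_cancel₀ hφ₀]

namespace IsMollifier

variable {d : ℕ} {φ u : Ed d → ℝ} {ρ : ℝ}

theorem radius_pos (hφ : IsMollifier φ ρ) : 0 < ρ := by
  by_contra! hρ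
  have hφ₀ : φ = 0 := Function.support_eq_empty_iff.1
    (subset_empty_iff.1 (hφ.support_subset.trans_eq (ball_eq_empty.2 hρ)))
  simpa [hφ₀] using hφ.integral_eq_one

protected theorem scaled (hφ : IsMollifier φ ρ) {l : ℝ} (hl : 0 < l) :
    IsMollifier (scaled φ 0 l) (ρ * l) where
  isTestFunction := hφ.isTestFunction.scaled 0 hl
  integral_eq_one := (integral_scaled φ 0 hl).trans hφ.integral_eq_one
  support_subset := support_scaled_subset_ball 0 hφ.support_subset hl

theorem isTestFunction_sub_conv (hφ : IsMollifier φ ρ) (hu : IsTestFunction u) :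
    IsTestFunction (u - conv φ u) :=
  hu.sub (hφ.isTestFunction.conv hu)

theorem support_sub_conv_subset_ball (hφ : IsMollifier φ ρ) {x : Ed d} {r : ℝ} (hr : 0 < r)
    (hu : support u ⊆ ball x r) : support (u - conv φ u) ⊆ ball x (r + ρ) :=
  (Function.support_sub _ _).trans (union_subset
    (hu.trans (ball_subset_ball (le_add_of_nonneg_right hφ.radius_pos.le)))
    (support_conv_subset_ball hφ.radius_pos hr hφ.support_subset hu))

theorem Cnorm_sub_conv_le (hφ : IsMollifier φ ρ) (hu : IsTestFunction u) (r : ℕ) :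
    Cnorm r (u - conv φ u) ≤ (∫ t, |φ t|) * (ρ * Cnorm (r + 1) u) := by
  refine Cnorm_le fun i hi x => ?_
  have hdiff : Differentiable ℝ (iteratedFDeriv ℝ i u) :=
    (hu.contDiff_nat (i + 1)).differentiable_iteratedFDeriv (by exact_mod_cast i.lt_succ_self)
  rw [iteratedFDeriv_sub_apply (hu.contDiff_nat i).contDiffAt
    ((hφ.isTestFunction.conv hu).contDiff_nat i).contDiffAt,
    hφ.isTestFunction.iteratedFDeriv_conv hu]
  refine norm_sub_convolution_lsmul_le hφ.radius_pos.le hφ.isTestFunction.integrable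
    hφ.integral_eq_one hφ.support_subset hdiff (fun y => ?_) x
  rw [norm_fderiv_iteratedFDeriv]
  exact norm_iteratedFDeriv_le_Cnorm hu (Nat.succ_le_succ hi) y

theorem tendsto_apply_conv_scaled (hφ : IsMollifier φ ρ) {T : (Ed d → ℝ) →ₗ[ℝ] ℝ}
    (hT : IsDistribution T) (hu : IsTestFunction u) :
    Tendsto (fun l => T (conv (scaled φ 0 l) u)) (𝓝[>] 0) (𝓝 (T u)) := by
  obtain ⟨R, hR, huR⟩ := hu.exists_support_subset_ball
  obtain ⟨r, C, hC₀, hC⟩ := hT.exists_nonneg (isCompact_closedBall 0 (R + ρ))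
  have hbound (l : ℝ) (hl : l ∈ Ioc (0 : ℝ) 1) : dist (T (conv (scaled φ 0 l) u)) (T u)
      ≤ C * ((∫ t, |φ t|) * (ρ * l * Cnorm (r + 1) u)) := by
    have hφl := hφ.scaled hl.1
    have hsupp : support (u - conv (scaled φ 0 l) u) ⊆ closedBall 0 (R + ρ) :=
      (hφl.support_sub_conv_subset_ball hR huR).trans <| ball_subset_closedBall.trans <|
        closedBall_subset_closedBall <|
          add_le_add_right (mul_le_of_le_one_right hφ.radius_pos.le hl.2) R
    rw [dist_comm, Real.dist_eq, ← map_sub, ← integral_abs_scaled φ 0 hl.1]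
    exact (hC _ (hφl.isTestFunction_sub_conv hu) hsupp).trans
      (mul_le_mul_of_nonneg_left (hφl.Cnorm_sub_conv_le hu r) hC₀)
  refine tendsto_iff_dist_tendsto_zero.2 (squeeze_zero' (.of_forall fun _ => dist_nonneg)
    (eventually_of_mem (Ioc_mem_nhdsGT one_pos) hbound) ?_)
  refine tendsto_nhdsWithin_of_tendsto_nhds (Continuous.tendsto' (by fun_prop) _ _ ?_)
  simp

end IsMollifier

namespace Reconstructs

variable {d : ℕ} {γ : ℝ} {F G : Ed d → ((Ed d → ℝ) →ₗ[ℝ] ℝ)} {f g : (Ed d → ℝ) →ₗ[ℝ] ℝ}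

theorem linearCombination (hf : Reconstructs γ F f) (hg : Reconstructs γ G g) (a b : ℝ) :
    Reconstructs γ (fun x => a • F x + b • G x) (a • f + b • g) := by
  intro ξ hξ K hK
  obtain ⟨C, hC⟩ := hf ξ hξ K hK
  obtain ⟨D, hD⟩ := hg ξ hξ K hK
  refine ⟨|a| * C + |b| * D, fun x hx l hl => ?_⟩
  calc |a * f (scaled ξ x l) + b * g (scaled ξ x l)
        - (a * F x (scaled ξ x l) + b * G x (scaled ξ x l))|
      = |a * (f (scaled ξ x l) - F x (scaled ξ x l))
        + b * (g (scaled ξ x l) - G x (scaled ξ x l))| := by congr 1; ring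
    _ ≤ |a| * |f (scaled ξ x l) - F x (scaled ξ x l)|
        + |b| * |g (scaled ξ x l) - G x (scaled ξ x l)| := by
      simpa only [abs_mul] using abs_add_le (a * _) (b * _)
    _ ≤ |a| * (C * l ^ γ) + |b| * (D * l ^ γ) := by
      gcongr
      exacts [hC x hx l hl, hD x hx l hl]
    _ = (|a| * C + |b| * D) * l ^ γ := by ring

theorem eq_zero (hγ : 0 < γ) (hf : IsDistribution f) (h : Reconstructs γ (fun _ => 0) f)
    {ψ : Ed d → ℝ} (hψ : IsTestFunction ψ) : f ψ = 0 := by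
  obtain ⟨φ, ρ, hφ⟩ := exists_isMollifier d
  obtain ⟨C, hC⟩ := h φ hφ.isTestFunction (tsupport ψ) hψ.2
  have hbound (l : ℝ) (hl : l ∈ Ioc (0 : ℝ) 1) :
      ‖f (conv (scaled φ 0 l) ψ)‖ ≤ C * l ^ γ * ∫ w, |ψ w| := by
    rw [hf.apply_conv_scaled hφ.isTestFunction hl.1 hψ]
    exact abs_integral_mul_le_of_abs_le_on_support hψ.integrable fun w hw => by
      simpa using hC w (subset_tsupport ψ hw) l hl
  have hlim : Tendsto (fun l => f (conv (scaled φ 0 l) ψ)) (𝓝[>] 0) (𝓝 0) := by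
    refine squeeze_zero_norm' (eventually_of_mem (Ioc_mem_nhdsGT one_pos) hbound)
      (tendsto_nhdsWithin_of_tendsto_nhds (Continuous.tendsto' ?_ _ _ ?_))
    · have := Real.continuous_rpow_const hγ.le
      fun_prop
    · simp [Real.zero_rpow hγ.ne']
  exact tendsto_nhds_unique (hφ.tendsto_apply_conv_scaled hf hψ) hlim

theorem unique (hγ : 0 < γ) (hf : IsDistribution f) (hg : IsDistribution g)
    (hFf : Reconstructs γ F f) (hFg : Reconstructs γ F g) {ψ : Ed d → ℝ}
    (hψ : IsTestFunction ψ) : f ψ = g ψ := by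
  refine sub_eq_zero.1 (eq_zero hγ (hf.sub hg) ?_ hψ)
  convert hFf.linearCombination hFg 1 (-1) using 1
  · funext x
    module
  · module

end Reconstructs

/-! ### Multiscale expansion of test functions -/

/-- The remainder `(1 - φ^{1/2ⁿ⁻¹} *) ⋯ (1 - φ^{1/2} *) (1 - φ *) ψ`, with `φ^l = scaled φ 0 l`,
left after expanding `ψ` in mollified pieces at the `n` scales `1, 1/2, …, 1/2ⁿ⁻¹`. Replacing `φ`
by `φ^ε` yields the expansion starting from the scale `ε`. -/
def remainder {d : ℕ} (φ : Ed d → ℝ) : ℕ → (Ed d → ℝ) → Ed d → ℝ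
  | 0, ψ => ψ
  | n + 1, ψ => remainder φ n ψ - conv (scaled φ 0 ((1 / 2) ^ n)) (remainder φ n ψ)

section Remainder

variable {d : ℕ} {φ ψ χ : Ed d → ℝ} {ρ : ℝ}

theorem remainder_succ' (φ ψ : Ed d → ℝ) (n : ℕ) :
    remainder φ (n + 1) ψ = remainder (scaled φ 0 (1 / 2)) n (ψ - conv φ ψ) := by
  induction n with
  | zero => simp only [remainder, pow_zero, scaled_zero_one]
  | succ n ih => rw [remainder, ih, remainder, scaled_scaled, pow_succ']

theorem remainder_const_smul (φ ψ : Ed d → ℝ) (c : ℝ) (n : ℕ) :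
    remainder φ n (c • ψ) = c • remainder φ n ψ := by
  induction n with
  | zero => rfl
  | succ n ih => rw [remainder, ih, conv_const_smul, remainder, smul_sub]

theorem remainder_scaled (φ ξ : Ed d → ℝ) (x : Ed d) {ε : ℝ} (hε : 0 < ε) (n : ℕ) :
    remainder (scaled φ 0 ε) n (scaled ξ x ε) = scaled (remainder φ n ξ) x ε := by
  induction n with
  | zero => rfl
  | succ n ih =>
    rw [remainder, ih, remainder, scaled_sub, scaled_conv _ _ _ hε, scaled_scaled, scaled_scaled,
      mul_comm ε]

namespace IsMollifier

theorem isTestFunction_remainder (hφ : IsMollifier φ ρ) (hψ : IsTestFunction ψ) (n : ℕ) :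
    IsTestFunction (remainder φ n ψ) := by
  induction n with
  | zero => exact hψ
  | succ n ih => exact (hφ.scaled (by positivity)).isTestFunction_sub_conv ih

theorem remainder_add (hφ : IsMollifier φ ρ) (hψ : IsTestFunction ψ) (hχ : IsTestFunction χ)
    (n : ℕ) : remainder φ n (ψ + χ) = remainder φ n ψ + remainder φ n χ := by
  induction n with
  | zero => rfl
  | succ n ih =>
    rw [remainder, ih, (hφ.scaled (by positivity)).isTestFunction.conv_add
      (hφ.isTestFunction_remainder hψ n) (hφ.isTestFunction_remainder hχ n), remainder, remainder,
      add_sub_add_comm]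

theorem support_remainder_subset_ball (hφ : IsMollifier φ ρ) {x : Ed d} {r : ℝ} (hr : 0 < r)
    (hψ : support ψ ⊆ ball x r) (n : ℕ) :
    support (remainder φ n ψ) ⊆ ball x (r + 2 * ρ) := by
  have hstep : support (remainder φ n ψ) ⊆ ball x (r + 2 * ρ * (1 - (1 / 2) ^ n)) := by
    induction n with
    | zero => simpa [remainder] using hψ
    | succ n ih =>
      have hpow : ((1 : ℝ) / 2) ^ n ≤ 1 := pow_le_one₀ (by norm_num) (by norm_num)
      have hpos : 0 < r + 2 * ρ * (1 - (1 / 2) ^ n) :=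
        add_pos_of_pos_of_nonneg hr
          (mul_nonneg (by linarith [hφ.radius_pos]) (sub_nonneg.2 hpow))
      have h := (hφ.scaled (pow_pos one_half_pos n)).support_sub_conv_subset_ball hpos ih
      exact h.trans (ball_subset_ball (Eq.le (by ring)))
  refine hstep.trans (ball_subset_ball ?_)
  have := mul_nonneg hφ.radius_pos.le (pow_nonneg one_half_pos.le n : (0 : ℝ) ≤ (1 / 2) ^ n)
  linarith

theorem Cnorm_remainder_succ_le (hφ : IsMollifier φ ρ) (hψ : IsTestFunction ψ) (m n : ℕ) :
    Cnorm m (remainder φ (n + 1) ψ)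
      ≤ (∫ t, |φ t|) * (ρ * (1 / 2) ^ n * Cnorm (m + 1) (remainder φ n ψ)) := by
  have h := (hφ.scaled (pow_pos one_half_pos n)).Cnorm_sub_conv_le
    (hφ.isTestFunction_remainder hψ n) m
  rwa [integral_abs_scaled φ 0 (pow_pos one_half_pos n)] at h

theorem Cnorm_remainder_le (hφ : IsMollifier φ ρ) (hψ : IsTestFunction ψ) (m n : ℕ) :
    Cnorm m (remainder φ n ψ) ≤ (1 + ∫ t, |φ t|) ^ n * Cnorm m ψ := by
  induction n with
  | zero => simp [remainder]
  | succ n ih =>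
    have hR := hφ.isTestFunction_remainder hψ n
    have hφn := (hφ.scaled (pow_pos one_half_pos n)).isTestFunction
    calc Cnorm m (remainder φ (n + 1) ψ)
        ≤ Cnorm m (remainder φ n ψ) + (∫ t, |φ t|) * Cnorm m (remainder φ n ψ) := by
          refine (Cnorm_sub_le hR (hφn.conv hR) m).trans (add_le_add_right ?_ _)
          have h := Cnorm_conv_le hφn hR m
          rwa [integral_abs_scaled φ 0 (pow_pos one_half_pos n)] at h
      _ = (1 + ∫ t, |φ t|) * Cnorm m (remainder φ n ψ) := by ring
      _ ≤ (1 + ∫ t, |φ t|) * ((1 + ∫ t, |φ t|) ^ n * Cnorm m ψ) := by gcongr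
      _ = (1 + ∫ t, |φ t|) ^ (n + 1) * Cnorm m ψ := by ring

/- Trading `j` derivatives for the gain `2⁻ⁿ` of the `n`-th factor, `j` times over, improves the
rate from `q` to `q / 2 ^ j`. -/
theorem exists_Cnorm_remainder_le_div_two_pow (hφ : IsMollifier φ ρ) (j : ℕ) : ∃ C, ∀ ψ,
    IsTestFunction ψ → ∀ m n, Cnorm m (remainder φ n ψ)
      ≤ C * ((1 + ∫ t, |φ t|) / 2 ^ j) ^ n * Cnorm (m + j) ψ := by
  set q : ℝ := 1 + ∫ t, |φ t|
  have : 0 ≤ ∫ t, |φ t| := integral_nonneg fun t => abs_nonneg _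
  induction j with
  | zero => exact ⟨1, fun ψ hψ m n => by simpa using hφ.Cnorm_remainder_le hψ m n⟩
  | succ j ih =>
    obtain ⟨C, hC⟩ := ih
    refine ⟨max 1 ((∫ t, |φ t|) * ρ * C * (2 ^ (j + 1) / q)), fun ψ hψ m n => ?_⟩
    have hψ₀ := Cnorm_nonneg (m + (j + 1)) ψ
    cases n with
    | zero =>
      rw [pow_zero, mul_one]
      exact (Cnorm_mono hψ (Nat.le_add_right m (j + 1))).trans
        (le_mul_of_one_le_left hψ₀ (le_max_left _ _))
    | succ n =>
      have hρ := hφ.radius_pos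
      have hq₀ : 0 < q := by positivity
      calc Cnorm m (remainder φ (n + 1) ψ)
          ≤ (∫ t, |φ t|) * (ρ * (1 / 2) ^ n * (C * (q / 2 ^ j) ^ n * Cnorm (m + 1 + j) ψ)) := by
            refine (hφ.Cnorm_remainder_succ_le hψ m n).trans ?_
            gcongr
            exact hC ψ hψ (m + 1) n
        _ = (∫ t, |φ t|) * ρ * C * (2 ^ (j + 1) / q) * (q / 2 ^ (j + 1)) ^ (n + 1)
              * Cnorm (m + (j + 1)) ψ := by
            rw [add_right_comm m 1 j, add_assoc m j 1, pow_succ (q / _) n, pow_succ 2 j,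
              ← div_div q, div_pow (q / 2 ^ j) 2 n, one_div_pow]
            field_simp
        _ ≤ _ := by
            gcongr
            exact le_max_right _ _

theorem exists_Cnorm_remainder_le_pow (hφ : IsMollifier φ ρ) {θ : ℝ} (hθ : 0 < θ) :
    ∃ j, ∃ C ≥ 0, ∀ ψ, IsTestFunction ψ → ∀ m n,
      Cnorm m (remainder φ n ψ) ≤ C * θ ^ n * Cnorm (m + j) ψ := by
  obtain ⟨j, hj⟩ := pow_unbounded_of_one_lt ((1 + ∫ t, |φ t|) / θ) one_lt_two
  obtain ⟨C, hC⟩ := hφ.exists_Cnorm_remainder_le_div_two_pow j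
  have : 0 ≤ ∫ t, |φ t| := integral_nonneg fun t => abs_nonneg _
  refine ⟨j, max C 0, le_max_right _ _, fun ψ hψ m n => (hC ψ hψ m n).trans ?_⟩
  refine mul_le_mul_of_nonneg_right ?_ (Cnorm_nonneg _ _)
  refine mul_le_mul (le_max_left _ _) (pow_le_pow_left₀ (by positivity) ?_ n) (by positivity)
    (le_max_right _ _)
  rw [div_le_iff₀ (by positivity), mul_comm]
  exact ((div_lt_iff₀ hθ).1 hj).le

end IsMollifier

end Remainder

/-! ### Coherent germs -/

theorem IsGerm.measurable_apply_scaled {d : ℕ} {F : Ed d → ((Ed d → ℝ) →ₗ[ℝ] ℝ)} (hF : IsGerm F)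
    {φ : Ed d → ℝ} (hφ : IsTestFunction φ) {l : ℝ} (hl : 0 < l) :
    Measurable fun w => F w (scaled φ w l) := by
  have huncurry : Measurable (Function.uncurry fun w x => F x (scaled φ w l)) :=
    measurable_uncurry_of_continuous_of_measurable
      (fun x => (hF.1 x).continuous_apply_scaled hφ hl) (fun w => hF.2 _ (hφ.scaled w hl))
  exact huncurry.comp (measurable_id.prodMk measurable_id)

namespace GammaCoherentWith

variable {d : ℕ} {γ : ℝ} {F : Ed d → ((Ed d → ℝ) →ₗ[ℝ] ℝ)} {φ ψ : Ed d → ℝ} {K : Set (Ed d)}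

theorem const_smul (h : GammaCoherentWith γ F φ) (c : ℝ) : GammaCoherentWith γ F (c • φ) := by
  intro K hK
  obtain ⟨α, hα, C, hC⟩ := h K hK
  refine ⟨α, hα, |c| * C, fun y hy z hz ε hε => ?_⟩
  rw [scaled_const_smul, map_smul, map_smul, ← smul_sub, smul_eq_mul, abs_mul]
  exact (mul_le_mul_of_nonneg_left (hC y hy z hz ε hε) (abs_nonneg c)).trans_eq (by ring)

/- The loss `A ^ n`, with `A = 2 ^ (-α)`, comes from the singular factor `(ε 2⁻ⁿ) ^ α`. -/
theorem exists_abs_sub_apply_scaled_le (h : GammaCoherentWith γ F φ) (hK : IsCompact K) {R : ℝ}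
    (hR : 0 ≤ R) : ∃ A > 0, ∃ C ≥ 0, ∀ x ∈ K, ∀ ε ∈ Ioc (0 : ℝ) 1, ∀ n : ℕ, ∀ w,
      dist w x ≤ R * ε → |(F w - F x) (scaled φ w (ε * (1 / 2) ^ n))| ≤ C * ε ^ γ * A ^ n := by
  obtain ⟨α, hα, C, hC⟩ := h (cthickening R K) hK.cthickening
  have hαγ : 0 ≤ γ - α := sub_nonneg.2 (hα.trans (min_le_right 0 γ))
  refine ⟨(1 / 2) ^ α, by positivity, |C| * (R + 1) ^ (γ - α), by positivity,
    fun x hx ε hε n w hw => ?_⟩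
  obtain ⟨hε₀, hε₁⟩ := hε
  have hpow : ((1 : ℝ) / 2) ^ n ≤ 1 := pow_le_one₀ (by norm_num) (by norm_num)
  have hscale : ε * (1 / 2) ^ n ≤ ε := mul_le_of_le_one_right hε₀.le hpow
  have hwK : w ∈ cthickening R K :=
    mem_cthickening_of_dist_le w x R K hx (hw.trans (mul_le_of_le_one_right hR hε₁))
  rw [LinearMap.sub_apply, abs_sub_comm]
  calc |F x (scaled φ w (ε * (1 / 2) ^ n)) - F w (scaled φ w (ε * (1 / 2) ^ n))|
      ≤ C * (ε * (1 / 2) ^ n) ^ α * (‖x - w‖ + ε * (1 / 2) ^ n) ^ (γ - α) :=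
        hC w hwK x (self_subset_cthickening K hx) _ ⟨by positivity, hscale.trans hε₁⟩
    _ ≤ |C| * (ε * (1 / 2) ^ n) ^ α * ((R + 1) * ε) ^ (γ - α) := by
        gcongr
        · exact le_abs_self C
        · rw [add_one_mul, ← dist_eq_norm, dist_comm]
          exact add_le_add hw hscale
    _ = |C| * (R + 1) ^ (γ - α) * (ε ^ α * ε ^ (γ - α)) * ((1 / 2) ^ n) ^ α := by
        rw [Real.mul_rpow hε₀.le (by positivity), Real.mul_rpow (by positivity) hε₀.le]
        ring
    _ = |C| * (R + 1) ^ (γ - α) * ε ^ γ * ((1 / 2) ^ α) ^ n := by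
        rw [← Real.rpow_add hε₀, add_sub_cancel, ← Real.rpow_natCast_mul (by norm_num),
          ← Real.rpow_mul_natCast (by norm_num), mul_comm (n : ℝ) α]

theorem integrable_apply_scaled_mul (h : GammaCoherentWith γ F φ) (hF : IsGerm F)
    (hφ : IsTestFunction φ) {l : ℝ} (hl : l ∈ Ioc (0 : ℝ) 1) (hψ : IsTestFunction ψ) :
    Integrable fun w => F w (scaled φ w l) * ψ w := by
  obtain ⟨R, hR, hψR⟩ := hψ.exists_support_subset_ball
  obtain ⟨A, -, C, -, hC⟩ := h.exists_abs_sub_apply_scaled_le (isCompact_singleton (x := 0))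
    (div_pos hR hl.1).le
  have hdiff : Integrable fun w => (F w - F 0) (scaled φ w l) * ψ w := by
    refine integrable_mul_of_abs_le_on_support (M := C * l ^ γ)
      ((hF.measurable_apply_scaled hφ hl.1).sub
        ((hF.1 0).continuous_apply_scaled hφ hl.1).measurable).aestronglyMeasurable
      hψ.integrable fun w hw => ?_
    simpa using hC 0 rfl l hl 0 w (by rw [div_mul_cancel₀ R hl.1.ne']; exact (hψR hw).le)
  have hconst := (hF.1 0).integrable_apply_scaled_mul hφ hl.1 hψ
  refine (hdiff.add hconst).congr (ae_of_all _ fun w => ?_)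
  simp only [Pi.add_apply, LinearMap.sub_apply]
  ring

/- The loss `A ^ n` of the coherence bound is absorbed by the decay of the remainders. -/
theorem exists_abs_integral_sub_mul_remainder_le {ρ : ℝ} (h : GammaCoherentWith γ F φ)
    (hφ : IsMollifier φ ρ) (hK : IsCompact K) {R : ℝ} (hR : 0 < R) :
    ∃ k, ∃ C ≥ 0, ∀ x ∈ K, ∀ ε ∈ Ioc (0 : ℝ) 1, ∀ ξ, IsTestFunction ξ → support ξ ⊆ ball 0 R →
      ∀ n, |∫ w, (F w - F x) (scaled φ w (ε * (1 / 2) ^ n))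
        * remainder (scaled φ 0 ε) n (scaled ξ x ε) w| ≤ C * Cnorm k ξ * ε ^ γ * (1 / 2) ^ n := by
  have hR' : 0 < R + 2 * ρ := by linarith [hφ.radius_pos]
  obtain ⟨A, hA, C, hC₀, hC⟩ := h.exists_abs_sub_apply_scaled_le hK hR'.le
  obtain ⟨k, D, hD₀, hD⟩ := hφ.exists_Cnorm_remainder_le_pow (θ := (2 * A)⁻¹) (by positivity)
  set V := volume.real (ball (0 : Ed d) (R + 2 * ρ))
  refine ⟨k, C * V * D, by positivity, fun x hx ε hε ξ hξ hξR n => ?_⟩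
  have hε₀ := hε.1
  have hRξ := hφ.isTestFunction_remainder hξ n
  have hsupp := hφ.support_remainder_subset_ball hR hξR n
  rw [remainder_scaled φ ξ x hε.1]
  calc |∫ w, (F w - F x) (scaled φ w (ε * (1 / 2) ^ n)) * scaled (remainder φ n ξ) x ε w|
      ≤ C * ε ^ γ * A ^ n * ∫ w, |scaled (remainder φ n ξ) x ε w| :=
        abs_integral_mul_le_of_abs_le_on_support (hRξ.scaled x hε.1).integrable fun w hw =>
          hC x hx ε hε n w (support_scaled_subset_ball x hsupp hε.1 hw).le
    _ ≤ C * ε ^ γ * A ^ n * (V * (D * (2 * A)⁻¹ ^ n * Cnorm k ξ)) := by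
        rw [integral_abs_scaled _ x hε.1]
        gcongr
        refine (integral_abs_le_Cnorm measure_ball_lt_top.ne hRξ hsupp).trans ?_
        gcongr
        simpa only [zero_add] using hD ξ hξ 0 n
    _ = C * V * D * Cnorm k ξ * ε ^ γ * (A ^ n * (2 * A)⁻¹ ^ n) := by ring
    _ = C * V * D * Cnorm k ξ * ε ^ γ * (1 / 2) ^ n := by
        rw [← mul_pow, mul_inv, mul_left_comm, mul_inv_cancel₀ hA.ne', mul_one, one_div]

end GammaCoherentWith

/-! ### Multiscale reconstruction -/

/-- The functional `T` resums the values `F w (κ_w^{2⁻ⁿ})` of the germ `F` at all scales `2⁻ⁿ`,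
weighted by the remainders of the expansion of the test function. With `κ = scaled φ 0 ε` the scales
are `ε 2⁻ⁿ` relative to `φ`. -/
def IsMultiscaleReconstruction {d : ℕ} (F : Ed d → ((Ed d → ℝ) →ₗ[ℝ] ℝ)) (κ : Ed d → ℝ)
    (T : (Ed d → ℝ) →ₗ[ℝ] ℝ) : Prop :=
  ∀ ψ, IsTestFunction ψ →
    HasSum (fun n : ℕ => ∫ w, F w (scaled κ w ((1 / 2) ^ n)) * remainder κ n ψ w) (T ψ)

section MultiscaleReconstruction

variable {d : ℕ} {γ : ℝ} {F : Ed d → ((Ed d → ℝ) →ₗ[ℝ] ℝ)} {φ ψ : Ed d → ℝ} {ρ : ℝ}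
  {T S : (Ed d → ℝ) →ₗ[ℝ] ℝ}

/- Each term equals `T (R n) - T (R (n + 1))` for the remainders `R n`, which tend to `0`. -/
theorem IsDistribution.isMultiscaleReconstruction_const (hT : IsDistribution T)
    (hφ : IsMollifier φ ρ) : IsMultiscaleReconstruction (fun _ => T) φ T := by
  intro ψ hψ
  obtain ⟨R, hR, hψR⟩ := hψ.exists_support_subset_ball
  obtain ⟨r, C, hC₀, hC⟩ := hT.exists_nonneg (isCompact_closedBall 0 (R + 2 * ρ))
  obtain ⟨j, D, -, hD⟩ := hφ.exists_Cnorm_remainder_le_pow one_half_pos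
  have hsummable : Summable fun n => T (remainder φ n ψ) := by
    refine .of_norm_bounded (g := fun n => C * D * Cnorm (r + j) ψ * (1 / 2) ^ n)
      (summable_geometric_two.mul_left _) fun n => ?_
    refine (hC _ (hφ.isTestFunction_remainder hψ n)
      ((hφ.support_remainder_subset_ball hR hψR n).trans ball_subset_closedBall)).trans ?_
    exact (mul_le_mul_of_nonneg_left (hD ψ hψ r n) hC₀).trans_eq (by ring)
  have hterm (n : ℕ) : ∫ w, T (scaled φ w ((1 / 2) ^ n)) * remainder φ n ψ w
      = T (remainder φ n ψ) - T (remainder φ (n + 1) ψ) := by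
    rw [← hT.apply_conv_scaled hφ.isTestFunction (by positivity)
      (hφ.isTestFunction_remainder hψ n), remainder, map_sub, sub_sub_cancel]
  simp only [hterm]
  simpa [remainder] using
    hsummable.hasSum.sub ((hasSum_nat_add_iff' 1).2 hsummable.hasSum)

namespace IsMultiscaleReconstruction

/- Splitting off the first scale of `ψ` leaves the expansion of `ψ - φ * ψ` started at scale
`1 / 2`, on which `S` takes the value `S ψ - ∫ S (φ_w) ψ(w) dw`. -/
theorem sub_eq_integral (hT : IsMultiscaleReconstruction F φ T)
    (hS : IsMultiscaleReconstruction F (scaled φ 0 (1 / 2)) S) (hφ : IsMollifier φ ρ)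
    (hSd : IsDistribution S) (hψ : IsTestFunction ψ)
    (hFψ : Integrable fun w => F w (scaled φ w 1) * ψ w) :
    T ψ - S ψ = ∫ w, (F w - S) (scaled φ w 1) * ψ w := by
  have htail := hS _ (hφ.isTestFunction_sub_conv hψ)
  simp only [scaled_scaled, ← remainder_succ', ← pow_succ'] at htail
  have hhead := ((hasSum_nat_add_iff' 1).2 (hT ψ hψ)).unique htail
  have hconv : S (conv φ ψ) = ∫ w, S (scaled φ w 1) * ψ w := by
    rw [← hSd.apply_conv_scaled hφ.isTestFunction one_pos hψ, scaled_zero_one]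
  simp only [Finset.sum_range_one, pow_zero, remainder, map_sub, hconv] at hhead
  rw [hSd.integral_sub_apply_scaled_mul hφ.isTestFunction one_pos hψ hFψ]
  linarith

end IsMultiscaleReconstruction

namespace GammaCoherentWith

variable {K : Set (Ed d)} {ε R : ℝ} {ξ : Ed d → ℝ}

theorem integrable_mul_remainder (h : GammaCoherentWith γ F φ) (hF : IsGerm F)
    (hφ : IsMollifier φ ρ) (hε : ε ∈ Ioc (0 : ℝ) 1) (hψ : IsTestFunction ψ) (n : ℕ) :
    Integrable fun w => F w (scaled φ w (ε * (1 / 2) ^ n)) * remainder (scaled φ 0 ε) n ψ w :=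
  h.integrable_apply_scaled_mul hF hφ.isTestFunction
    ⟨mul_pos hε.1 (pow_pos one_half_pos n),
      mul_le_one₀ hε.2 (by positivity) (pow_le_one₀ (by norm_num) (by norm_num))⟩
    ((hφ.scaled hε.1).isTestFunction_remainder hψ n)

theorem integral_sub_mul_remainder (h : GammaCoherentWith γ F φ) (hF : IsGerm F)
    (hφ : IsMollifier φ ρ) (hε : ε ∈ Ioc (0 : ℝ) 1) (hψ : IsTestFunction ψ) (x : Ed d) (n : ℕ) :
    ∫ w, (F w - F x) (scaled φ w (ε * (1 / 2) ^ n)) * remainder (scaled φ 0 ε) n ψ w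
      = (∫ w, F w (scaled φ w (ε * (1 / 2) ^ n)) * remainder (scaled φ 0 ε) n ψ w)
        - ∫ w, F x (scaled φ w (ε * (1 / 2) ^ n)) * remainder (scaled φ 0 ε) n ψ w :=
  (hF.1 x).integral_sub_apply_scaled_mul hφ.isTestFunction
    (mul_pos hε.1 (pow_pos one_half_pos n)) ((hφ.scaled hε.1).isTestFunction_remainder hψ n)
    (h.integrable_mul_remainder hF hφ hε hψ n)

theorem hasSum_sub (h : GammaCoherentWith γ F φ) (hF : IsGerm F) (hφ : IsMollifier φ ρ)
    (hε : ε ∈ Ioc (0 : ℝ) 1) (hT : IsMultiscaleReconstruction F (scaled φ 0 ε) T)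
    (hψ : IsTestFunction ψ) (x : Ed d) :
    HasSum (fun n : ℕ => ∫ w, (F w - F x) (scaled φ w (ε * (1 / 2) ^ n))
      * remainder (scaled φ 0 ε) n ψ w) (T ψ - F x ψ) := by
  have hconst := (hF.1 x).isMultiscaleReconstruction_const (hφ.scaled hε.1)
  simpa only [scaled_scaled, ← h.integral_sub_mul_remainder hF hφ hε hψ x]
    using (hT ψ hψ).sub (hconst ψ hψ)

theorem exists_abs_sub_apply_le (h : GammaCoherentWith γ F φ) (hF : IsGerm F)
    (hφ : IsMollifier φ ρ) (hK : IsCompact K) (hR : 0 < R) :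
    ∃ k, ∃ C ≥ 0, ∀ x ∈ K, ∀ ε ∈ Ioc (0 : ℝ) 1, ∀ T,
      IsMultiscaleReconstruction F (scaled φ 0 ε) T → ∀ ξ, IsTestFunction ξ →
      support ξ ⊆ ball 0 R → |(T - F x) (scaled ξ x ε)| ≤ C * Cnorm k ξ * ε ^ γ := by
  obtain ⟨k, C, hC₀, hC⟩ := h.exists_abs_integral_sub_mul_remainder_le hφ hK hR
  refine ⟨k, C * 2, by positivity, fun x hx ε hε T hT ξ hξ hξR => ?_⟩
  have hsum := h.hasSum_sub hF hφ hε hT (hξ.scaled x hε.1) x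
  exact (hsum.norm_le_of_bounded (hasSum_geometric_two.mul_left _)
    (hC x hx ε hε ξ hξ hξR)).trans_eq (by ring)

theorem summable_integral_mul_remainder (h : GammaCoherentWith γ F φ) (hF : IsGerm F)
    (hφ : IsMollifier φ ρ) (hε : ε ∈ Ioc (0 : ℝ) 1) (hψ : IsTestFunction ψ) :
    Summable fun n : ℕ =>
      ∫ w, F w (scaled φ w (ε * (1 / 2) ^ n)) * remainder (scaled φ 0 ε) n ψ w := by
  have hψε := hψ.scaled 0 (inv_pos.2 hε.1)
  obtain ⟨R, hR, hψR⟩ := hψε.exists_support_subset_ball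
  obtain ⟨k, C, -, hC⟩ := h.exists_abs_integral_sub_mul_remainder_le hφ
    (isCompact_singleton (x := (0 : Ed d))) hR
  have hconst := ((hF.1 0).isMultiscaleReconstruction_const (hφ.scaled hε.1) ψ hψ).summable
  have hdiff := Summable.of_norm_bounded
    (f := fun n : ℕ => ∫ w, (F w - F 0) (scaled φ w (ε * (1 / 2) ^ n))
      * remainder (scaled φ 0 ε) n (scaled (scaled ψ 0 ε⁻¹) 0 ε) w)
    (summable_geometric_two.mul_left _) (hC 0 rfl ε hε _ hψε hψR)
  simp only [scaled_scaled, inv_mul_cancel₀ hε.1.ne', scaled_zero_one,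
    h.integral_sub_mul_remainder hF hφ hε hψ 0] at hdiff hconst
  simpa only [sub_add_cancel] using hdiff.add hconst

theorem exists_isMultiscaleReconstruction (h : GammaCoherentWith γ F φ) (hF : IsGerm F)
    (hφ : IsMollifier φ ρ) (hε : ε ∈ Ioc (0 : ℝ) 1) :
    ∃ T, IsMultiscaleReconstruction F (scaled φ 0 ε) T := by
  let term (n : ℕ) : testFunctions d →ₗ[ℝ] ℝ :=
    { toFun := fun ψ =>
        ∫ w, F w (scaled φ w (ε * (1 / 2) ^ n)) * remainder (scaled φ 0 ε) n ψ w
      map_add' := fun ψ χ => by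
        simp only [Submodule.coe_add, (hφ.scaled hε.1).remainder_add ψ.2 χ.2, Pi.add_apply, mul_add]
        exact integral_add (h.integrable_mul_remainder hF hφ hε ψ.2 n)
          (h.integrable_mul_remainder hF hφ hε χ.2 n)
      map_smul' := fun c ψ => by
        simp only [Submodule.coe_smul, remainder_const_smul, Pi.smul_apply, smul_eq_mul,
          mul_left_comm, integral_const_mul, RingHom.id_apply] }
  have hterm (ψ : testFunctions d) : Summable fun n => term n ψ :=
    h.summable_integral_mul_remainder hF hφ hε ψ.2
  obtain ⟨T, hT⟩ := exists_linearMap_forall_tendsto (l := atTop)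
    (fun s : Finset ℕ => ∑ n ∈ s, term n) fun ψ =>
      ⟨∑' n, term n ψ, by
        simpa only [HasSum, SummationFilter.unconditional_filter, LinearMap.sum_apply]
          using (hterm ψ).hasSum⟩
  refine ⟨T, fun ψ hψ => ?_⟩
  have hsum : HasSum (fun n => term n ⟨ψ, hψ⟩) (T ψ) := by
    simpa only [HasSum, SummationFilter.unconditional_filter, LinearMap.sum_apply]
      using hT ⟨ψ, hψ⟩
  simp only [scaled_scaled]
  exact hsum

theorem isDistribution_of_isMultiscaleReconstruction (h : GammaCoherentWith γ F φ) (hF : IsGerm F)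
    (hφ : IsMollifier φ ρ) (hε : ε ∈ Ioc (0 : ℝ) 1)
    (hT : IsMultiscaleReconstruction F (scaled φ 0 ε) T) : IsDistribution T := by
  refine (hF.1 0).of_abs_sub_le fun K hK => ?_
  have hε' : 0 < ε⁻¹ := inv_pos.2 hε.1
  obtain ⟨R, hR, hKR⟩ := hK.isBounded.subset_ball_lt 0 0
  obtain ⟨k, C, hC₀, hC⟩ := h.exists_abs_sub_apply_le hF hφ
    (isCompact_singleton (x := (0 : Ed d))) (mul_pos hR hε')
  refine ⟨k, C * ε ^ γ, fun u hu huK => ?_⟩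
  have hdiff := hC 0 rfl ε hε T hT _ (hu.scaled 0 hε')
    (support_scaled_subset_ball 0 (huK.trans hKR) hε')
  rw [scaled_scaled, inv_mul_cancel₀ hε.1.ne', scaled_zero_one] at hdiff
  rw [abs_sub_comm]
  calc |(T - F 0) u| ≤ C * Cnorm k (scaled u 0 ε⁻¹) * ε ^ γ := hdiff
    _ ≤ C * Cnorm k u * ε ^ γ := by
        have hε₀ := hε.1
        gcongr
        exact Cnorm_scaled_le hu 0 (one_le_inv_iff₀.2 hε) k
    _ = C * ε ^ γ * Cnorm k u := by ring

theorem exists_abs_sub_apply_scaled_le_rpow (h : GammaCoherentWith γ F φ) (hF : IsGerm F)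
    (hφ : IsMollifier φ ρ) (hK : IsCompact K) (hξ : IsTestFunction ξ) :
    ∃ C ≥ 0, ∀ x ∈ K, ∀ ε ∈ Ioc (0 : ℝ) 1, ∀ T,
      IsMultiscaleReconstruction F (scaled φ 0 ε) T → ∀ l ∈ Icc ε (2 * ε),
      |(T - F x) (scaled ξ x l)| ≤ C * ε ^ γ := by
  obtain ⟨R, hR, hξR⟩ := hξ.exists_support_subset_ball
  obtain ⟨k, C, hC₀, hC⟩ := h.exists_abs_sub_apply_le hF hφ hK (mul_pos hR two_pos)
  refine ⟨C * Cnorm k ξ, mul_nonneg hC₀ (Cnorm_nonneg k ξ), fun x hx ε hε T hT l hl => ?_⟩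
  have hε₀ := hε.1
  have hl₁ : 1 ≤ l / ε := (one_le_div hε.1).2 hl.1
  have hl₂ : l / ε ≤ 2 := (div_le_iff₀ hε.1).2 hl.2
  have hl₀ : 0 < l / ε := one_pos.trans_le hl₁
  have hbound := hC x hx ε hε T hT _ (hξ.scaled 0 hl₀)
    ((support_scaled_subset_ball 0 hξR hl₀).trans (ball_subset_ball (by gcongr)))
  rw [scaled_scaled, div_mul_cancel₀ l hε.1.ne'] at hbound
  refine hbound.trans ?_
  gcongr
  exact Cnorm_scaled_le hξ 0 hl₁ k

theorem exists_abs_sub_half_le_rpow (h : GammaCoherentWith γ F φ) (hF : IsGerm F)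
    (hφ : IsMollifier φ ρ) (hK : IsCompact K) :
    ∃ C, ∀ ε ∈ Ioc (0 : ℝ) 1, ∀ T S, IsMultiscaleReconstruction F (scaled φ 0 ε) T →
      IsMultiscaleReconstruction F (scaled φ 0 (ε * (1 / 2))) S → ∀ ψ, IsTestFunction ψ →
      support ψ ⊆ K → |T ψ - S ψ| ≤ C * (ε * (1 / 2)) ^ γ * ∫ w, |ψ w| := by
  obtain ⟨C, -, hC⟩ := h.exists_abs_sub_apply_scaled_le_rpow hF hφ hK hφ.isTestFunction
  refine ⟨C, fun ε hε T S hT hS ψ hψ hψK => ?_⟩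
  have hε₀ := hε.1
  have hε' : ε * (1 / 2) ∈ Ioc (0 : ℝ) 1 := ⟨by positivity, by linarith [hε.2]⟩
  have hFψ := h.integrable_apply_scaled_mul hF hφ.isTestFunction hε hψ
  have hSd := h.isDistribution_of_isMultiscaleReconstruction hF hφ hε' hS
  rw [hT.sub_eq_integral (by rwa [scaled_scaled]) (hφ.scaled hε₀) hSd hψ
    (by simpa only [scaled_scaled, mul_one] using hFψ)]
  refine abs_integral_mul_le_of_abs_le_on_support hψ.integrable fun w hw => ?_
  rw [scaled_scaled, mul_one, ← neg_sub S, LinearMap.neg_apply, abs_neg]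
  exact hC w (hψK hw) _ hε' S hS ε ⟨by linarith, by linarith⟩

theorem exists_isDistribution_isMultiscaleReconstruction_abs_sub_le (h : GammaCoherentWith γ F φ)
    (hF : IsGerm F) (hφ : IsMollifier φ ρ) (hγ : 0 < γ) :
    ∃ (T : ℕ → (Ed d → ℝ) →ₗ[ℝ] ℝ) (f : (Ed d → ℝ) →ₗ[ℝ] ℝ),
      (∀ N, IsMultiscaleReconstruction F (scaled φ 0 ((1 / 2) ^ N)) (T N)) ∧
      IsDistribution f ∧ ∀ K, IsCompact K → ∃ C, ∀ N ψ, IsTestFunction ψ → support ψ ⊆ K →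
        |T N ψ - f ψ| ≤ C * ((1 / 2) ^ N) ^ γ * ∫ w, |ψ w| := by
  have hpow (N : ℕ) : (((1 : ℝ) / 2) ^ N) ^ γ = ((1 / 2) ^ γ) ^ N :=
    (Real.rpow_pow_comm one_half_pos.le γ N).symm
  have hmem (N : ℕ) : ((1 : ℝ) / 2) ^ N ∈ Ioc (0 : ℝ) 1 :=
    ⟨by positivity, pow_le_one₀ (by norm_num) (by norm_num)⟩
  choose T hT using fun N => h.exists_isMultiscaleReconstruction hF hφ (hmem N)
  obtain ⟨f, hf, hfT⟩ := (h.isDistribution_of_isMultiscaleReconstruction hF hφ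
    (hmem 0) (hT 0)).exists_abs_sub_le_of_le_geometric (T := T)
    (Real.rpow_lt_one one_half_pos.le one_half_lt_one hγ) fun K hK => by
      obtain ⟨C, hC⟩ := h.exists_abs_sub_half_le_rpow hF hφ hK
      refine ⟨C * (1 / 2) ^ γ, fun N ψ hψ hψK => ?_⟩
      have hN := hC _ (hmem N) (T N) (T (N + 1)) (hT N) (hT (N + 1)) ψ hψ hψK
      rwa [← pow_succ, hpow, pow_succ', ← mul_assoc] at hN
  exact ⟨T, f, hT, hf, by simpa only [hpow] using hfT⟩

theorem exists_reconstructs (h : GammaCoherentWith γ F φ) (hF : IsGerm F)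
    (hφ : IsMollifier φ ρ) (hγ : 0 < γ) : ∃ f, IsDistribution f ∧ Reconstructs γ F f := by
  obtain ⟨T, f, hT, hf, hfT⟩ :=
    h.exists_isDistribution_isMultiscaleReconstruction_abs_sub_le hF hφ hγ
  refine ⟨f, hf, fun ξ hξ K hK => ?_⟩
  obtain ⟨R, hR, hξR⟩ := hξ.exists_support_subset_ball
  obtain ⟨C, hC₀, hC⟩ := h.exists_abs_sub_apply_scaled_le_rpow hF hφ hK hξ
  obtain ⟨D, hD⟩ := hfT _ (hK.cthickening (r := R))
  refine ⟨|D| * (∫ t, |ξ t|) + C, fun x hx l hl => ?_⟩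
  obtain ⟨N, hNl, hlN⟩ :=
    exists_nat_pow_near_of_lt_one hl.1 hl.2 one_half_pos one_half_lt_one
  set δ : ℝ := (1 / 2) ^ (N + 1) with hδ
  have hδ₀ : 0 < δ := by positivity
  have hlδ : l ≤ 2 * δ := hlN.trans_eq (by rw [hδ]; ring)
  have hsupp : support (scaled ξ x l) ⊆ cthickening R K :=
    (support_scaled_subset_ball x hξR hl.1).trans <| ball_subset_closedBall.trans <|
      (closedBall_subset_closedBall (mul_le_of_le_one_right hR.le hl.2)).trans
        (closedBall_subset_cthickening hx R)
  have hlimit := hD (N + 1) _ (hξ.scaled x hl.1) hsupp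
  have hlocal := hC x hx δ ⟨hδ₀, hNl.le.trans hl.2⟩ (T (N + 1)) (hT (N + 1)) l ⟨hNl.le, hlδ⟩
  rw [integral_abs_scaled ξ x hl.1, abs_sub_comm] at hlimit
  have : 0 ≤ ∫ t, |ξ t| := integral_nonneg fun _ => abs_nonneg _
  calc |f (scaled ξ x l) - F x (scaled ξ x l)|
      ≤ |f (scaled ξ x l) - T (N + 1) (scaled ξ x l)| + |(T (N + 1) - F x) (scaled ξ x l)| :=
        abs_sub_le _ _ _
    _ ≤ D * δ ^ γ * (∫ t, |ξ t|) + C * δ ^ γ := add_le_add hlimit hlocal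
    _ ≤ |D| * δ ^ γ * (∫ t, |ξ t|) + C * δ ^ γ := by gcongr; exact le_abs_self D
    _ = (|D| * (∫ t, |ξ t|) + C) * δ ^ γ := by ring
    _ ≤ (|D| * (∫ t, |ξ t|) + C) * l ^ γ := by gcongr

end GammaCoherentWith

end MultiscaleReconstruction

/-- Reconstruction Theorem for γ > 0: existence, uniqueness,
and linearity of the reconstruction map. -/
theorem stmt8 {d : ℕ} (γ : ℝ) (hγ : 0 < γ)
    (φ : Ed d → ℝ) (hφ : IsTestFunction φ) (hφi : (∫ x, φ x) ≠ 0) :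
    (∀ F : Ed d → ((Ed d → ℝ) →ₗ[ℝ] ℝ), IsGerm F → GammaCoherentWith γ F φ →
      ∃ f : (Ed d → ℝ) →ₗ[ℝ] ℝ, IsDistribution f ∧ Reconstructs γ F f ∧
        ∀ g : (Ed d → ℝ) →ₗ[ℝ] ℝ, IsDistribution g → Reconstructs γ F g →
          ∀ ψ : Ed d → ℝ, IsTestFunction ψ → g ψ = f ψ) ∧
    (∀ F₁ F₂ : Ed d → ((Ed d → ℝ) →ₗ[ℝ] ℝ), ∀ f₁ f₂ : (Ed d → ℝ) →ₗ[ℝ] ℝ, ∀ a b : ℝ,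
      IsGerm F₁ → IsGerm F₂ → GammaCoherentWith γ F₁ φ → GammaCoherentWith γ F₂ φ →
      IsDistribution f₁ → IsDistribution f₂ →
      Reconstructs γ F₁ f₁ → Reconstructs γ F₂ f₂ →
      Reconstructs γ (fun x => a • F₁ x + b • F₂ x) (a • f₁ + b • f₂)) := by
  refine ⟨fun F hF hFφ => ?_, fun F₁ F₂ f₁ f₂ a b _ _ _ _ _ _ hf₁ hf₂ =>
    hf₁.linearCombination hf₂ a b⟩
  obtain ⟨ρ, hmollifier⟩ := hφ.exists_isMollifier hφi
  obtain ⟨f, hf, hFf⟩ := (hFφ.const_smul _).exists_reconstructs hF hmollifier hγ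
  exact ⟨f, hf, hFf, fun g hg hFg ψ hψ => hFg.unique hγ hg hf hFf hψ⟩
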